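/- (Simultaneous recovery under a mean-separation bound.) Fix d ≥ 1, means μ_1,…,μ_K ∈ ℝ^d, standard deviations σ_1,…,σ_K > 0 with σ_max = max_m σ_m, and weights w_1,…,w_K > 0 summing to 1 with w_min = min_m w_m. Let θ = 2d and c_d = F(2d, d), i.e., the probability that a chi-squared random variable with d degrees of freedom is at most 4d². Suppose min_{1 ≤ m < m′ ≤ K} ‖μ_m − μ_{m′}‖ > 16·d·σ_max/(c_d·w_min). For each n let a_1,…,a_n be i.i.d. samples from the mixture Σ_{k=1}^K w_k·N(μ_k, σ_k²·I_d) and let V_m = {i : ‖a_i − μ_m‖ ≤ 2d·σ_m}. Then there exists a choice of λ = λ(n) > 0 and constants c > 0, C such that for every n, with probability at least 1 − C·e^{−c·n}, the minimizer x* of the sum-of-norms clustering objective with parameter λ(n) satisfies: for each m, x_i* = x_{i′}* for all i, i′ ∈ V_m; and for each m ≠ m′ and all i ∈ V_m, i′ ∈ V_{m′}, x_i* ≠ x_{i′}*. -/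

import Mathlib

open MeasureTheory ProbabilityTheory Finset

/-- The sum-of-norms clustering objective. -/
noncomputable def sonObjective {d n : ℕ} (a : Fin n → EuclideanSpace ℝ (Fin d)) (lam : ℝ)
    (x : Fin n → EuclideanSpace ℝ (Fin d)) : ℝ :=
  (1 / 2) * ∑ i, ‖x i - a i‖ ^ 2 + lam * ∑ i, ∑ j, if i < j then ‖x i - x j‖ else 0

/-- The spherical Gaussian `N(μ, σ²·I_d)` on `ℝ^d`. -/
noncomputable def sphericalGaussian (d : ℕ) (μ : EuclideanSpace ℝ (Fin d)) (σ : ℝ) :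
    Measure (EuclideanSpace ℝ (Fin d)) :=
  (Measure.pi fun i : Fin d => gaussianReal (μ i) (Real.toNNReal (σ ^ 2))).map
    (MeasurableEquiv.toLp 2 (Fin d → ℝ))

/-- The mixture of Gaussians `Σ_m w_m · N(μ_m, σ_m²·I_d)`. -/
noncomputable def gaussianMixture (d K : ℕ) (μ : Fin K → EuclideanSpace ℝ (Fin d))
    (σ : Fin K → ℝ) (w : Fin K → ℝ) : Measure (EuclideanSpace ℝ (Fin d)) :=
  ∑ m, ENNReal.ofReal (w m) • sphericalGaussian d (μ m) (σ m)

/-- The chi-squared distribution with `d` degrees of freedom. -/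
noncomputable def chiSquaredMeasure (d : ℕ) : Measure ℝ :=
  (Measure.pi fun _ : Fin d => gaussianReal 0 1).map (fun y => ∑ i, (y i) ^ 2)

/-- `F(θ, d)`: the probability that a chi-squared random variable with `d` degrees of
freedom is at most `θ²`. -/
noncomputable def chiSquaredCDF (θ : ℝ) (d : ℕ) : ℝ :=
  (chiSquaredMeasure d (Set.Iic (θ ^ 2))).toReal

section Deterministic

variable {d n : ℕ}

lemma son_symm (lam : ℝ) (a x : Fin n → EuclideanSpace ℝ (Fin d)) :
    sonObjective a lam x = (1 / 2) * ∑ i, ‖x i - a i‖ ^ 2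
      + lam / 2 * ∑ i, ∑ j, ‖x i - x j‖ := by
  have h1 : ∑ i, ∑ j, ‖x i - x j‖ = (∑ i, ∑ j, if i < j then ‖x i - x j‖ else 0)
      + ∑ i, ∑ j, if j < i then ‖x i - x j‖ else 0 := by
    rw [← Finset.sum_add_distrib]
    refine Finset.sum_congr rfl fun i _ => ?_
    rw [← Finset.sum_add_distrib]
    refine Finset.sum_congr rfl fun j _ => ?_
    rcases lt_trichotomy i j with h | h | h
    · simp [h, h.not_gt]
    · simp [h]
    · simp [h, h.not_gt]
  have h2 : (∑ i, ∑ j, if j < i then ‖x i - x j‖ else 0)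
      = ∑ i, ∑ j, if i < j then ‖x i - x j‖ else 0 := by
    rw [Finset.sum_comm]
    refine Finset.sum_congr rfl fun i _ => Finset.sum_congr rfl fun j _ => ?_
    rw [norm_sub_rev]
  rw [sonObjective, h1, h2]; ring

lemma son_dist_le {lam : ℝ} (hlam : 0 < lam) (a x : Fin n → EuclideanSpace ℝ (Fin d))
    (hx : ∀ y, sonObjective a lam x ≤ sonObjective a lam y) (k : Fin n) (t : ℝ)
    (ht : 0 < t) : (1 - t / 2) * ‖x k - a k‖ ≤ lam * n := by
  by_cases hv : ‖x k - a k‖ = 0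
  · rw [hv]; simp; positivity
  have hv0 : 0 < ‖x k - a k‖ := lt_of_le_of_ne (norm_nonneg _) (Ne.symm hv)
  set y : Fin n → EuclideanSpace ℝ (Fin d) := Function.update x k (x k - t • (x k - a k)) with hy
  have h := hx y
  rw [son_symm, son_symm] at h
  have hyx : ∀ i, ‖y i - x i‖ = if i = k then t * ‖x k - a k‖ else 0 := by
    intro i
    by_cases hi : i = k
    · subst hi; simp [hy, norm_smul, abs_of_pos ht]
    · simp [hy, hi]
  have hpen : ∑ i, ∑ j, ‖y i - y j‖ ≤ ∑ i, ∑ j, ‖x i - x j‖ + 2 * n * (t * ‖x k - a k‖) := by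
    have : ∑ i, ∑ j, ‖y i - y j‖ ≤ ∑ i, ∑ j, (‖x i - x j‖ + ‖y i - x i‖ + ‖y j - x j‖) := by
      refine Finset.sum_le_sum fun i _ => Finset.sum_le_sum fun j _ => ?_
      have e : y i - y j = (x i - x j) + (y i - x i) - (y j - x j) := by abel
      rw [e]
      exact (norm_sub_le _ _).trans (add_le_add (norm_add_le _ _) le_rfl)
    refine this.trans (le_of_eq ?_)
    simp only [hyx, Finset.sum_add_distrib, Finset.sum_const, Finset.sum_ite_eq',
      Finset.mem_univ, if_true, Finset.card_univ, Fintype.card_fin, nsmul_eq_mul]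
    rw [← Finset.mul_sum]
    simp
    ring
  have hq : ∑ i, ‖y i - a i‖ ^ 2 = ∑ i, ‖x i - a i‖ ^ 2 + ((1 - t) ^ 2 - 1) * ‖x k - a k‖ ^ 2 := by
    have : ∀ i, ‖y i - a i‖ ^ 2 = ‖x i - a i‖ ^ 2
        + if i = k then ((1 - t) ^ 2 - 1) * ‖x k - a k‖ ^ 2 else 0 := by
      intro i
      by_cases hi : i = k
      · subst hi
        have e : y i - a i = (1 - t) • (x i - a i) := by
          simp only [hy, Function.update_self]; module
        rw [e, norm_smul, mul_pow]; simp; ring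
      · simp [hy, hi]
    simp [this, Finset.sum_add_distrib]
  rw [hq] at h
  have h3 := mul_le_mul_of_nonneg_left hpen (half_pos hlam).le
  have h4 : (t * ‖x k - a k‖) * ((1 - t / 2) * ‖x k - a k‖) ≤ (t * ‖x k - a k‖) * (lam * n) := by
    nlinarith
  exact le_of_mul_le_mul_left h4 (by positivity)

lemma son_cluster {lam D : ℝ} (hlam : 0 < lam) (a x : Fin n → EuclideanSpace ℝ (Fin d))
    (hx : ∀ y, sonObjective a lam x ≤ sonObjective a lam y) (V : Finset (Fin n))
    (hD : ∀ i ∈ V, ∀ j ∈ V, ‖a i - a j‖ ≤ D) (hN : D ≤ lam * V.card) :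
    ∀ i ∈ V, ∀ j ∈ V, x i = x j := by
  rcases V.eq_empty_or_nonempty with hV | hV
  · simp [hV]
  have hN0 : (0 : ℝ) < V.card := by exact_mod_cast hV.card_pos
  set S := ∑ i ∈ V, x i with hS
  set b := (V.card : ℝ)⁻¹ • S with hb
  have hSb : S = (V.card : ℝ) • b := by rw [hb, smul_smul, mul_inv_cancel₀ hN0.ne', one_smul]
  set y : Fin n → EuclideanSpace ℝ (Fin d) := fun i => if i ∈ V then b else x i with hy
  have hyV : ∀ i ∈ V, y i = b := fun i hi => by simp [hy, hi]
  have hyC : ∀ i ∈ Vᶜ, y i = x i := fun i hi => by simp [hy, Finset.mem_compl.1 hi]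
  have h := hx y
  rw [son_symm, son_symm] at h
  have hcross : ∀ z : EuclideanSpace ℝ (Fin d),
      ∑ i ∈ V, ‖b - z‖ ≤ ∑ i ∈ V, ‖x i - z‖ := by
    intro z
    have e : (V.card : ℝ) • (b - z) = ∑ i ∈ V, (x i - z) := by
      rw [Finset.sum_sub_distrib, ← hS, hSb, smul_sub, Finset.sum_const, ← Nat.cast_smul_eq_nsmul ℝ]
    calc ∑ i ∈ V, ‖b - z‖ = ‖(V.card : ℝ) • (b - z)‖ := by simp [norm_smul]
      _ ≤ _ := by rw [e]; exact norm_sum_le _ _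
  have split : ∀ g : Fin n → Fin n → ℝ, ∑ i, ∑ j, g i j = ∑ i ∈ V, ∑ j ∈ V, g i j
      + ∑ j ∈ Vᶜ, ∑ i ∈ V, g i j + ∑ i ∈ Vᶜ, ∑ j ∈ V, g i j + ∑ i ∈ Vᶜ, ∑ j ∈ Vᶜ, g i j := by
    intro g
    rw [← Finset.sum_add_sum_compl V, Finset.sum_comm (s := Vᶜ) (t := V)]
    simp only [← Finset.sum_add_sum_compl V (fun j => g _ j), Finset.sum_add_distrib]
    ring
  have hpen : ∑ i, ∑ j, ‖y i - y j‖ + ∑ i ∈ V, ∑ j ∈ V, ‖x i - x j‖ ≤ ∑ i, ∑ j, ‖x i - x j‖ := by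
    rw [split (fun i j => ‖y i - y j‖), split (fun i j => ‖x i - x j‖)]
    have e1 : ∑ i ∈ V, ∑ j ∈ V, ‖y i - y j‖ = 0 :=
      Finset.sum_eq_zero fun i hi => Finset.sum_eq_zero fun j hj => by
        rw [hyV i hi, hyV j hj]; simp
    have e2 : ∑ j ∈ Vᶜ, ∑ i ∈ V, ‖y i - y j‖ ≤ ∑ j ∈ Vᶜ, ∑ i ∈ V, ‖x i - x j‖ := by
      refine Finset.sum_le_sum fun j hj => ?_
      rw [hyC j hj, Finset.sum_congr rfl fun i hi => by rw [hyV i hi]]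
      exact hcross _
    have e3 : ∑ i ∈ Vᶜ, ∑ j ∈ V, ‖y i - y j‖ ≤ ∑ i ∈ Vᶜ, ∑ j ∈ V, ‖x i - x j‖ := by
      refine Finset.sum_le_sum fun j hj => ?_
      simp only [norm_sub_rev (y j), norm_sub_rev (x j)]
      rw [hyC j hj, Finset.sum_congr rfl fun i hi => by rw [hyV i hi]]
      exact hcross _
    have e4 : ∑ i ∈ Vᶜ, ∑ j ∈ Vᶜ, ‖y i - y j‖ = ∑ i ∈ Vᶜ, ∑ j ∈ Vᶜ, ‖x i - x j‖ :=
      Finset.sum_congr rfl fun i hi => Finset.sum_congr rfl fun j hj => by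
        rw [hyC i hi, hyC j hj]
    linarith
  have hq : ∑ i, ‖y i - a i‖ ^ 2 + (∑ i ∈ V, ‖x i - b‖ ^ 2
      - 2 * ∑ i ∈ V, inner ℝ (x i - b) (a i - b)) = ∑ i, ‖x i - a i‖ ^ 2 := by
    rw [← Finset.sum_add_sum_compl V (fun i => ‖y i - a i‖ ^ 2),
      ← Finset.sum_add_sum_compl V (fun i => ‖x i - a i‖ ^ 2),
      Finset.sum_congr (s₁ := Vᶜ) (g := fun i => ‖x i - a i‖ ^ 2) rfl
        (fun i hi => by rw [hyC i hi]),
      Finset.sum_congr (s₁ := V) (g := fun i => ‖b - a i‖ ^ 2) rfl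
        (fun i hi => by rw [hyV i hi])]
    have : ∑ i ∈ V, ‖x i - a i‖ ^ 2 = ∑ i ∈ V, ‖b - a i‖ ^ 2 + (∑ i ∈ V, ‖x i - b‖ ^ 2
      - 2 * ∑ i ∈ V, inner ℝ (x i - b) (a i - b)) := by
      rw [Finset.mul_sum, ← Finset.sum_sub_distrib, ← Finset.sum_add_distrib]
      refine Finset.sum_congr rfl fun i _ => ?_
      have e : x i - a i = (x i - b) - (a i - b) := by abel
      rw [e, norm_sub_sq_real, norm_sub_rev b]; ring
    rw [this]; ring
  have hinner : (V.card : ℝ) * (2 * ∑ i ∈ V, inner ℝ (x i - b) (a i - b))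
      = ∑ i ∈ V, ∑ j ∈ V, inner ℝ (x i - x j) (a i - a j) := by
    have z : ∑ i ∈ V, inner ℝ (x i - b) (a i - b) = ∑ i ∈ V, inner ℝ (x i) (a i)
        - inner ℝ b (∑ i ∈ V, a i) := by
      have z1 : ∑ i ∈ V, inner ℝ (x i - b) b = 0 := by
        rw [← sum_inner, Finset.sum_sub_distrib, ← hS, hSb, Finset.sum_const,
          ← Nat.cast_smul_eq_nsmul ℝ]
        simp
      simp only [inner_sub_right (_ - b), Finset.sum_sub_distrib, z1]
      simp only [inner_sub_left, Finset.sum_sub_distrib, inner_sum]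
      ring
    rw [z]
    simp only [inner_sub_left, inner_sub_right, Finset.sum_sub_distrib, ← inner_sum,
      ← sum_inner, Finset.sum_const, ← hS, ← Nat.cast_smul_eq_nsmul ℝ,
      real_inner_smul_right]
    rw [← Finset.mul_sum, show inner ℝ S (∑ i ∈ V, a i)
      = (V.card : ℝ) * inner ℝ b (∑ i ∈ V, a i) by rw [← real_inner_smul_left, ← hSb]]
    ring
  have hbound : ∑ i ∈ V, ∑ j ∈ V, inner ℝ (x i - x j) (a i - a j)
      ≤ (V.card : ℝ) * (lam * ∑ i ∈ V, ∑ j ∈ V, ‖x i - x j‖) := by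
    rw [← mul_assoc, mul_comm _ lam]
    simp only [Finset.mul_sum]
    refine Finset.sum_le_sum fun i hi => Finset.sum_le_sum fun j hj => ?_
    calc inner ℝ (x i - x j) (a i - a j) ≤ ‖x i - x j‖ * ‖a i - a j‖ := real_inner_le_norm _ _
      _ ≤ ‖x i - x j‖ * (lam * V.card) := by
        gcongr; exact (hD i hi j hj).trans hN
      _ = _ := by ring
  rw [← hinner] at hbound
  have hb2 := le_of_mul_le_mul_left hbound hN0
  have hfin : ∑ i ∈ V, ‖x i - b‖ ^ 2 ≤ 0 := by
    have := mul_le_mul_of_nonneg_left hpen (half_pos hlam).le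
    nlinarith
  have hall : ∀ i ∈ V, x i = b := by
    intro i hi
    have h0 := (Finset.sum_eq_zero_iff_of_nonneg (fun i _ => by positivity)).1
      (le_antisymm hfin (Finset.sum_nonneg fun i _ => by positivity)) i hi
    simpa [sub_eq_zero] using h0
  intro i hi j hj
  rw [hall i hi, hall j hj]

end Deterministic

section Probability

lemma binomial_lower_tail {E : Type*} [MeasurableSpace E] (ν : Measure E) [IsProbabilityMeasure ν]
    {B : Set E} (hB : MeasurableSet B) {p : ℝ} (hp : p ≤ ν.real B) (n : ℕ) [DecidablePred (· ∈ B)] :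
    (Measure.pi fun _ : Fin n => ν).real
      {a | ((Finset.univ.filter fun i => a i ∈ B).card : ℝ) ≤ 3 / 4 * (n * p)}
      ≤ Real.exp (-(p / 56) * n) := by
  set r : ℝ := Real.exp (-(1 / 6)) with hr
  have hr0 : 0 < r := Real.exp_pos _
  have hr1 : r ≤ 6 / 7 := by
    have h := Real.add_one_le_exp (1 / 6 : ℝ)
    rw [hr, Real.exp_neg, inv_le_comm₀ (Real.exp_pos _) (by norm_num)]
    norm_num at h ⊢; linarith
  set f : E → ℝ := fun x => B.indicator (fun _ => r - 1) x + 1 with hf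
  have hfval : ∀ x, f x = if x ∈ B then r else 1 := by
    intro x; by_cases h : x ∈ B <;> simp [hf, h]
  have hfm : Measurable f := (measurable_const.indicator hB).add measurable_const
  have hf1 : ∀ x, 0 ≤ f x ∧ f x ≤ 1 := by
    intro x; rw [hfval]; split_ifs <;> constructor <;> linarith
  have hint : ∫ x, f x ∂ν = 1 - ν.real B * (1 - r) := by
    rw [hf, integral_add ((integrable_const _).indicator hB) (integrable_const _),
      integral_indicator hB]
    simp; ring
  have hprod : ∀ a : Fin n → E, ∏ i, f (a i)
      = Real.exp (-(1 / 6) * ((Finset.univ.filter fun i => a i ∈ B).card : ℝ)) := by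
    intro a
    simp only [hfval, Finset.prod_ite, Finset.prod_const, one_pow, mul_one]
    rw [hr, ← Real.exp_nat_mul]; ring_nf
  have hI : ∫ a : Fin n → E, ∏ i, f (a i) ∂(Measure.pi fun _ : Fin n => ν)
      = (1 - ν.real B * (1 - r)) ^ n := by
    rw [integral_fintype_prod_eq_pow f, hint]; simp
  have hle : (1 - ν.real B * (1 - r)) ^ n ≤ Real.exp (-(p / 7) * n) := by
    rw [mul_comm (-(p / 7)), Real.exp_nat_mul]
    have hb : ν.real B ≤ 1 := measureReal_le_one
    have hb0 : 0 ≤ ν.real B := measureReal_nonneg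
    have := Real.add_one_le_exp (-(p / 7))
    apply pow_le_pow_left₀
    · nlinarith
    · nlinarith
  have hintg : Integrable (fun a : Fin n → E => ∏ i, f (a i)) (Measure.pi fun _ : Fin n => ν) := by
    refine Integrable.of_bound (C := 1) ?_ ?_
    · exact (Finset.measurable_prod _ fun i _ =>
        hfm.comp (measurable_pi_apply i)).aestronglyMeasurable
    · refine Filter.Eventually.of_forall fun a => ?_
      rw [Real.norm_of_nonneg (Finset.prod_nonneg fun i _ => (hf1 _).1)]
      exact Finset.prod_le_one (fun i _ => (hf1 _).1) fun i _ => (hf1 _).2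
  have hmk := mul_meas_ge_le_integral_of_nonneg (μ := Measure.pi fun _ : Fin n => ν)
    (Filter.Eventually.of_forall fun a => Finset.prod_nonneg fun i _ => (hf1 (a i)).1) hintg
    (Real.exp (-(p / 8) * n))
  have hset : {a : Fin n → E | ((Finset.univ.filter fun i => a i ∈ B).card : ℝ) ≤ 3 / 4 * (n * p)}
      ⊆ {a | Real.exp (-(p / 8) * n) ≤ ∏ i, f (a i)} := by
    intro a ha
    simp only [Set.mem_ofPred_eq] at ha ⊢
    rw [hprod, Real.exp_le_exp]
    linarith
  have h1 := measureReal_mono (μ := Measure.pi fun _ : Fin n => ν) hset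
  rw [hI] at hmk
  have h2 : Real.exp (-(p / 8) * n) * (Measure.pi fun _ : Fin n => ν).real
      {a | ((Finset.univ.filter fun i => a i ∈ B).card : ℝ) ≤ 3 / 4 * (n * p)}
      ≤ Real.exp (-(p / 8) * n) * Real.exp (-(p / 56) * n) := by
    rw [← Real.exp_add]
    refine (mul_le_mul_of_nonneg_left h1 (Real.exp_pos _).le).trans ((hmk.trans hle).trans ?_)
    rw [Real.exp_le_exp]; apply le_of_eq; ring
  exact le_of_mul_le_mul_left h2 (Real.exp_pos _)

instance sphericalGaussian_prob (d : ℕ) (μ : EuclideanSpace ℝ (Fin d)) (σ : ℝ) :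
    IsProbabilityMeasure (sphericalGaussian d μ σ) := by
  unfold sphericalGaussian
  exact Measure.isProbabilityMeasure_map (MeasurableEquiv.measurable _).aemeasurable

lemma sphericalGaussian_ball (d : ℕ) (μ : EuclideanSpace ℝ (Fin d)) (σ : ℝ) (hσ : 0 < σ) :
    (sphericalGaussian d μ σ).real {x | ‖x - μ‖ ≤ 2 * d * σ} = chiSquaredCDF (2 * d) d := by
  have hset : MeasurableSet {x : EuclideanSpace ℝ (Fin d) | ‖x - μ‖ ≤ 2 * d * σ} :=
    (isClosed_le (by fun_prop) continuous_const).measurableSet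
  have hpi : (Measure.pi fun i : Fin d => gaussianReal (μ i) (Real.toNNReal (σ ^ 2)))
      = (Measure.pi fun _ : Fin d => gaussianReal 0 1).map (fun y i => σ * y i + μ i) := by
    have hmap : ∀ i : Fin d, (gaussianReal 0 1).map (fun y => σ * y + μ i)
        = gaussianReal (μ i) (Real.toNNReal (σ ^ 2)) := by
      intro i
      have e : (fun y => σ * y + μ i) = (fun y => y + μ i) ∘ (fun y => σ * y) := rfl
      rw [e, ← Measure.map_map (by fun_prop) (by fun_prop), gaussianReal_map_const_mul,
        gaussianReal_map_add_const]
      congr 1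
      · simp
      · ext; simp [Real.coe_toNNReal _ (sq_nonneg σ)]
    rw [Measure.pi_map_pi (μ := fun _ : Fin d => gaussianReal 0 1)
      (f := fun i y => σ * y + μ i) (fun i => by fun_prop)]
    simp only [hmap]
  unfold sphericalGaussian chiSquaredCDF chiSquaredMeasure
  rw [Measure.real, Measure.map_apply (MeasurableEquiv.measurable _) hset, hpi,
    Measure.map_apply (by fun_prop) (MeasurableEquiv.measurable _ hset),
    Measure.map_apply (by fun_prop) measurableSet_Iic]
  congr 2
  ext y
  simp only [Set.mem_preimage, Set.mem_ofPred_eq, Set.mem_Iic]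
  rw [← abs_of_nonneg (norm_nonneg (_ : EuclideanSpace ℝ (Fin d))),
    ← abs_of_nonneg (show 0 ≤ 2 * (d : ℝ) * σ by positivity), ← sq_le_sq,
    EuclideanSpace.real_norm_sq_eq]
  simp only [PiLp.sub_apply, MeasurableEquiv.coe_toLp, add_sub_cancel_right, mul_pow,
    ← Finset.mul_sum]
  rw [mul_comm, mul_le_mul_iff_left₀ (by positivity)]

lemma chiSquaredCDF_pos (d : ℕ) (hd : 1 ≤ d) : 0 < chiSquaredCDF (2 * d) d := by
  unfold chiSquaredCDF chiSquaredMeasure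
  rw [Measure.map_apply (by fun_prop) measurableSet_Iic]
  refine ENNReal.toReal_pos ?_ (measure_ne_top _ _)
  have hsub : (Set.univ.pi fun _ : Fin d => Set.Icc (-1 : ℝ) 1) ⊆
      (fun y : Fin d → ℝ => ∑ i, (y i) ^ 2) ⁻¹' Set.Iic ((2 * (d : ℝ)) ^ 2) := by
    intro y hy
    simp only [Set.mem_preimage, Set.mem_Iic]
    have hd' : (1 : ℝ) ≤ d := by exact_mod_cast hd
    calc ∑ i, (y i) ^ 2 ≤ ∑ i : Fin d, (1 : ℝ) := by
          refine Finset.sum_le_sum fun i _ => ?_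
          have := hy i (Set.mem_univ i)
          rw [sq_le_one_iff_abs_le_one, abs_le]; exact this
      _ = d := by simp
      _ ≤ (2 * (d : ℝ)) ^ 2 := by nlinarith
  intro h0
  have h1 := measure_mono_null hsub h0
  rw [Measure.pi_pi, Finset.prod_eq_zero_iff] at h1
  obtain ⟨i, _, hi⟩ := h1
  have := gaussianReal_absolutelyContinuous' 0 (one_ne_zero) hi
  norm_num [Real.volume_Icc] at this

lemma chiSquaredCDF_le_one (d : ℕ) : chiSquaredCDF (2 * d) d ≤ 1 := by
  rw [← sphericalGaussian_ball d 0 1 one_pos]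
  exact measureReal_le_one

lemma gaussianMixture_prob (d K : ℕ) (μ : Fin K → EuclideanSpace ℝ (Fin d))
    (σ : Fin K → ℝ) (w : Fin K → ℝ) (hw : ∀ k, 0 < w k) (hwsum : ∑ k, w k = 1) :
    IsProbabilityMeasure (gaussianMixture d K μ σ w) := by
  constructor
  simp only [gaussianMixture, Measure.finsetSum_apply, Measure.smul_apply, measure_univ,
    smul_eq_mul, mul_one]
  rw [← ENNReal.ofReal_sum_of_nonneg (fun i _ => (hw i).le), hwsum, ENNReal.ofReal_one]

lemma gaussianMixture_ball (d K : ℕ) (μ : Fin K → EuclideanSpace ℝ (Fin d))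
    (σ : Fin K → ℝ) (hσ : ∀ k, 0 < σ k) (w : Fin K → ℝ) (hw : ∀ k, 0 < w k)
    (hwsum : ∑ k, w k = 1) (m : Fin K) :
    w m * chiSquaredCDF (2 * d) d
      ≤ (gaussianMixture d K μ σ w).real {x | ‖x - μ m‖ ≤ 2 * d * σ m} := by
  have := gaussianMixture_prob d K μ σ w hw hwsum
  rw [← sphericalGaussian_ball d (μ m) (σ m) (hσ m)]
  have h : ENNReal.ofReal (w m) * sphericalGaussian d (μ m) (σ m) {x | ‖x - μ m‖ ≤ 2 * d * σ m}
      ≤ gaussianMixture d K μ σ w {x | ‖x - μ m‖ ≤ 2 * d * σ m} := by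
    simp only [gaussianMixture, Measure.finsetSum_apply, Measure.smul_apply, smul_eq_mul]
    exact Finset.single_le_sum (f := fun k => ENNReal.ofReal (w k) *
      sphericalGaussian d (μ k) (σ k) {x | ‖x - μ m‖ ≤ 2 * d * σ m}) (fun _ _ => zero_le)
      (Finset.mem_univ m)
  have h2 := ENNReal.toReal_mono (measure_ne_top _ _) h
  rwa [ENNReal.toReal_mul, ENNReal.toReal_ofReal (hw m).le] at h2

end Probability

/-- Simultaneous recovery under a mean-separation bound: with `θ = 2d` and
`c_d = F(2d, d)`, if `min_{m ≠ m′} ‖μ_m − μ_{m′}‖ > 16·d·σ_max/(c_d·w_min)`, then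
there is a choice of `λ(n) > 0` so that with probability at least `1 − C·e^{−c·n}`
sum-of-norms clustering puts each `V_m = {i : ‖a_i − μ_m‖ ≤ 2d·σ_m}` inside a single
cluster, with distinct clusters for distinct components. -/
theorem simultaneous_recovery
    (d K : ℕ) (hd : 1 ≤ d) (μ : Fin K → EuclideanSpace ℝ (Fin d))
    (σ : Fin K → ℝ) (hσ : ∀ k, 0 < σ k)
    (w : Fin K → ℝ) (hw : ∀ k, 0 < w k) (hwsum : ∑ k, w k = 1)
    (σmax wmin : ℝ) (hσmax : IsGreatest (Set.range σ) σmax)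
    (hwmin : IsLeast (Set.range w) wmin)
    (hsep : ∀ m m' : Fin K, m ≠ m' →
      16 * (d : ℝ) * σmax / (chiSquaredCDF (2 * d) d * wmin) < ‖μ m - μ m'‖) :
    ∃ lam : ℕ → ℝ, (∀ n : ℕ, 0 < lam n) ∧
      ∃ c : ℝ, 0 < c ∧ ∃ C : ℝ, ∀ n : ℕ,
        ENNReal.ofReal (1 - C * Real.exp (-c * n)) ≤
          (Measure.pi fun _ : Fin n => gaussianMixture d K μ σ w)
            {a | ∀ x : Fin n → EuclideanSpace ℝ (Fin d),
              (∀ y : Fin n → EuclideanSpace ℝ (Fin d),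
                sonObjective a (lam n) x ≤ sonObjective a (lam n) y) →
              (∀ m : Fin K, ∀ i i' : Fin n,
                ‖a i - μ m‖ ≤ 2 * d * σ m → ‖a i' - μ m‖ ≤ 2 * d * σ m → x i = x i') ∧
              (∀ m m' : Fin K, m ≠ m' → ∀ i i' : Fin n,
                ‖a i - μ m‖ ≤ 2 * d * σ m → ‖a i' - μ m'‖ ≤ 2 * d * σ m' →
                x i ≠ x i')} := by
  classical
  have hprob := gaussianMixture_prob d K μ σ w hw hwsum
  have hcd := chiSquaredCDF_pos d hd
  have hcd1 := chiSquaredCDF_le_one d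
  set cd := chiSquaredCDF (2 * d) d with hcdef
  have hd' : (1 : ℝ) ≤ d := by exact_mod_cast hd
  obtain ⟨⟨ms, hms⟩, hσub⟩ := hσmax
  obtain ⟨⟨mw, hmw⟩, hwlb⟩ := hwmin
  have hσm : ∀ m, σ m ≤ σmax := fun m => hσub ⟨m, rfl⟩
  have hwm : ∀ m, wmin ≤ w m := fun m => hwlb ⟨m, rfl⟩
  have hσ0 : 0 < σmax := hms ▸ hσ ms
  have hw0 : 0 < wmin := hmw ▸ hw mw
  have hw1 : wmin ≤ 1 := by
    rw [← hwsum, ← hmw]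
    exact Finset.single_le_sum (f := w) (fun k _ => (hw k).le) (Finset.mem_univ mw)
  set p := cd * wmin with hp
  have hp0 : 0 < p := by positivity
  have hp1 : p ≤ 1 := by nlinarith
  set Q := (d : ℝ) * σmax / p with hQ
  have hQ0 : 0 < Q := by positivity
  have hQp : Q * p = d * σmax := by rw [hQ]; field_simp
  have hQge : (d : ℝ) * σmax ≤ Q := by rw [← hQp]; nlinarith
  refine ⟨fun n => 16 / 3 * Q / max (n : ℝ) 1, fun n => by positivity, p / 56, by positivity, K, ?_⟩
  intro n
  set P := Measure.pi fun _ : Fin n => gaussianMixture d K μ σ w with hP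
  let B : Fin K → Set (EuclideanSpace ℝ (Fin d)) := fun m => {x | ‖x - μ m‖ ≤ 2 * d * σ m}
  have hB : ∀ m, MeasurableSet (B m) := fun m =>
    (isClosed_le (by fun_prop) continuous_const).measurableSet
  let bad : Fin K → Set (Fin n → EuclideanSpace ℝ (Fin d)) := fun m =>
    {a | ((Finset.univ.filter fun i => a i ∈ B m).card : ℝ) ≤ 3 / 4 * (n * p)}
  have hbad : ∀ m, P.real (bad m) ≤ Real.exp (-(p / 56) * n) := by
    intro m
    refine binomial_lower_tail (gaussianMixture d K μ σ w) (hB m) ?_ n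
    refine le_trans ?_ (gaussianMixture_ball d K μ σ hσ w hw hwsum m)
    rw [hp, mul_comm]
    exact mul_le_mul_of_nonneg_right (hwm m) hcd.le
  set G : Set (Fin n → EuclideanSpace ℝ (Fin d)) := (⋃ m, bad m)ᶜ with hG
  have hunion : P.real (⋃ m, bad m) ≤ K * Real.exp (-(p / 56) * n) := by
    refine (measureReal_iUnion_fintype_le _).trans ?_
    calc ∑ m, P.real (bad m) ≤ ∑ m : Fin K, Real.exp (-(p / 56) * n) :=
          Finset.sum_le_sum fun m _ => hbad m
      _ = _ := by simp
  have hGP : 1 - K * Real.exp (-(p / 56) * n) ≤ P.real G := by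
    have h1 : P.real (Set.univ) ≤ P.real (⋃ m, bad m) + P.real G := by
      rw [hG, ← Set.union_compl_self (⋃ m, bad m)]
      exact measureReal_union_le _ _
    rw [probReal_univ] at h1
    linarith
  refine (ENNReal.ofReal_le_ofReal hGP).trans ?_
  rw [ofReal_measureReal]
  refine measure_mono ?_
  intro a ha
  rw [Set.mem_ofPred_eq]
  intro x hx
  have hlam : 0 < 16 / 3 * Q / max (n : ℝ) 1 := by positivity
  have hcount : ∀ m, 3 / 4 * (n * p) < ((Finset.univ.filter fun i => a i ∈ B m).card : ℝ) := by
    intro m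
    by_contra hcon
    exact ha (Set.mem_iUnion.2 ⟨m, not_lt.1 hcon⟩)
  have hmax : ∀ _ : Fin n, max (n : ℝ) 1 = n := by
    intro i
    have : 1 ≤ n := Nat.succ_le_of_lt (Fin.pos i)
    exact max_eq_left (by exact_mod_cast this)
  have hlamn : ∀ _ : Fin n, 16 / 3 * Q / max (n : ℝ) 1 * n = 16 / 3 * Q := by
    intro i
    have hn0 : (0 : ℝ) < n := by exact_mod_cast Fin.pos i
    rw [hmax i]; field_simp
  refine ⟨?_, ?_⟩
  · intro m i i' hi hi'
    refine son_cluster (D := 4 * d * σmax) hlam a x hx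
      (Finset.univ.filter fun i => a i ∈ B m) ?_ ?_ i (by simpa [B] using hi) i'
      (by simpa [B] using hi')
    · intro j hj k hk
      have hj : ‖a j - μ m‖ ≤ 2 * d * σ m := by simpa [B] using hj
      have hk : ‖a k - μ m‖ ≤ 2 * d * σ m := by simpa [B] using hk
      have e : a j - a k = (a j - μ m) - (a k - μ m) := by abel
      rw [e]
      have := norm_sub_le (a j - μ m) (a k - μ m)
      have := mul_le_mul_of_nonneg_left (hσm m) (by positivity : (0 : ℝ) ≤ d)
      linarith
    · have h1 := mul_le_mul_of_nonneg_left (hcount m).le hlam.le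
      refine le_trans (le_of_eq ?_) h1
      have h2 := hlamn i
      calc 4 * d * σmax = 4 * (Q * p) := by rw [hQp]; ring
        _ = 3 / 4 * p * (16 / 3 * Q) := by ring
        _ = 3 / 4 * p * (16 / 3 * Q / max (n : ℝ) 1 * n) := by rw [h2]
        _ = _ := by ring
  · intro m m' hmm i i' hi hi' hxx
    have h1 := son_dist_le hlam a x hx i (1 / 9) (by norm_num)
    have h2 := son_dist_le hlam a x hx i' (1 / 9) (by norm_num)
    rw [hlamn i] at h1 h2
    rw [← hxx] at h2
    have hs := hsep m m' hmm
    have e16 : 16 * (d : ℝ) * σmax / p = 16 * Q := by rw [hQ]; ring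
    rw [e16] at hs
    have e : μ m - μ m' = -(a i - μ m) - (x i - a i) + (x i - a i') + (a i' - μ m') := by abel
    have hn : ‖μ m - μ m'‖ ≤ ‖a i - μ m‖ + ‖x i - a i‖ + ‖x i - a i'‖ + ‖a i' - μ m'‖ := by
      rw [e]
      refine (norm_add_le _ _).trans (add_le_add ((norm_add_le _ _).trans
        (add_le_add ((norm_sub_le _ _).trans ?_) le_rfl)) le_rfl)
      rw [norm_neg]
    have := mul_le_mul_of_nonneg_left (hσm m) (by positivity : (0 : ℝ) ≤ d)
    have := mul_le_mul_of_nonneg_left (hσm m') (by positivity : (0 : ℝ) ≤ d)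
    linarith
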